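/- Let π_0,...,π_k > 0 with Σ_{i=0}^k π_i = 1 and let s_0 < s_1 < ... < s_k be distinct reals. Define the one-dimensional exponential family π(θ) ∈ Δ^k by π(θ)_i = π_i exp( s_i θ − ψ(θ) ) with ψ(θ) = log Σ_{i=0}^k π_i exp(s_i θ). Then for any θ_0 < θ_1 < ... < θ_k, the k vectors π(θ_1) − π(θ_0), ..., π(θ_k) − π(θ_0) are linearly independent in ℝ^{k+1}; equivalently, the points π(θ_0),...,π(θ_k) are affinely independent. Consequently the −1-convex hull of any open subset of this generic one-dimensional exponential family is of full dimension k in the simplex Δ^k. -/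

import Mathlib

/-!
The functions `θ ↦ exp (sᵢ θ)` with distinct `sᵢ` form a Chebyshev system: a combination of `n` of
them that vanishes at `n` distinct points has zero coefficients (`expSum_coeff_eq_zero`). This
follows by induction on `n`: multiplying by `exp (-s₀ θ)` turns one term into a constant, and Rolle's
theorem yields `n - 1` zeros of the derivative, an exponential sum with one term fewer.

Up to positive row and column scalings, the matrix with rows `π(θ₀), …, π(θ_k)` is
`(exp (sᵢ θⱼ))`, so the rows are linearly independent and their differences are too.
For an open set of parameters, the direction of the hull contains `k` such differences, and it lies
in the hyperplane of vectors with coordinate sum zero, so its dimension is exactly `k`.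
-/

/-- The exponentials `θ ↦ exp (sᵢ θ)` form a Chebyshev system. -/
theorem expSum_coeff_eq_zero (n : ℕ) : ∀ (s c t : Fin n → ℝ), StrictMono s → StrictMono t →
    (∀ j, ∑ i, c i * Real.exp (s i * t j) = 0) → ∀ i, c i = 0 := by
  induction n with
  | zero => intro s c t _ _ _ i; exact i.elim0
  | succ n ih =>
    intro s c t hs ht h
    -- The sum multiplied by `exp (-s₀ x)`, so that its first term is constant.
    let g : ℝ → ℝ := fun x => c 0 + ∑ i : Fin n, c i.succ * Real.exp ((s i.succ - s 0) * x)
    let g' : ℝ → ℝ := fun x =>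
      ∑ i : Fin n, (c i.succ * (s i.succ - s 0)) * Real.exp ((s i.succ - s 0) * x)
    have hg : ∀ x, HasDerivAt g (g' x) x := by
      intro x
      refine HasDerivAt.const_add _ (HasDerivAt.fun_sum fun i _ => ?_)
      have h1 : HasDerivAt (fun y : ℝ => (s i.succ - s 0) * y) (s i.succ - s 0) x := by
        simpa using (hasDerivAt_id x).const_mul (s i.succ - s 0)
      exact (h1.exp.const_mul (c i.succ)).congr_deriv (by ring)
    have hzero : ∀ j, g (t j) = 0 := by
      intro j
      have h1 : g (t j) = Real.exp (-(s 0 * t j)) * ∑ i, c i * Real.exp (s i * t j) := by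
        simp only [g]
        rw [Fin.sum_univ_succ, mul_add, Finset.mul_sum]
        congr 1
        · rw [mul_left_comm, ← Real.exp_add]; simp
        · refine Finset.sum_congr rfl fun i _ => ?_
          rw [mul_left_comm, ← Real.exp_add]
          congr 2; ring
      rw [h1, h j, mul_zero]
    have hrolle : ∀ j : Fin n, ∃ x ∈ Set.Ioo (t j.castSucc) (t j.succ), g' x = 0 := fun j =>
      exists_hasDerivAt_eq_zero (ht j.castSucc_lt_succ)
        (fun x _ => (hg x).continuousAt.continuousWithinAt)
        ((hzero _).trans (hzero _).symm) (fun x _ => hg x)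
    choose x hx hx0 using hrolle
    have hxm : StrictMono x := by
      intro a b hab
      have : t a.succ ≤ t b.castSucc := ht.monotone (by
        rw [Fin.le_def]; simpa using hab)
      exact (hx a).2.trans_le (this.trans (hx b).1.le)
    have hsucc : ∀ i : Fin n, c i.succ = 0 := by
      intro i
      have h1 := ih (fun i => s i.succ - s 0) (fun i => c i.succ * (s i.succ - s 0)) x
        (fun a b hab => sub_lt_sub_right (hs (Fin.succ_lt_succ_iff.2 hab)) _) hxm hx0 i
      exact (mul_eq_zero.1 h1).resolve_right (sub_pos.2 (hs i.succ_pos)).ne'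
    intro i
    refine Fin.cases ?_ hsucc i
    simpa [g, hsucc] using hzero 0

/-- If only the zero functional kills all of the `k + 1` points `p j` of `ℝ^(k+1)`, then the
differences from `p 0` are linearly independent. -/
theorem linearIndependent_sub_of_dual {k : ℕ} (p : Fin (k + 1) → Fin (k + 1) → ℝ)
    (h : ∀ c : Fin (k + 1) → ℝ, (∀ j, ∑ i, p j i * c i = 0) → c = 0) :
    LinearIndependent ℝ fun j : Fin k => p j.succ - p 0 := by
  have hinj : Function.Injective (Matrix.mulVec (Matrix.of p)) := by
    intro a b hab
    refine sub_eq_zero.1 (h _ fun j => ?_)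
    have h1 := congrFun hab j
    simp only [Matrix.mulVec, dotProduct, Matrix.of_apply] at h1
    simp only [Pi.sub_apply, mul_sub, Finset.sum_sub_distrib, h1, sub_self]
  have hrow : LinearIndependent ℝ p :=
    Matrix.linearIndependent_rows_iff_isUnit.2 (Matrix.mulVec_injective_iff_isUnit.1 hinj)
  rw [Fintype.linearIndependent_iff] at hrow ⊢
  intro g hg i
  have h1 := hrow (Fin.cons (-∑ j, g j) g) (by
    rw [Fin.sum_univ_succ]
    simp only [smul_sub, Finset.sum_sub_distrib, ← Finset.sum_smul] at hg
    simp only [Fin.cons_zero, Fin.cons_succ, neg_smul]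
    rw [← hg]; abel) i.succ
  simpa using h1

/-- Theorem 5.2 of the paper: for a generic one-dimensional exponential family
`π(θ)ᵢ = πᵢ exp(sᵢθ - ψ(θ))` in `Δᵏ` (base point strictly positive, natural statistic
values `s₀ < ⋯ < s_k` distinct), the points `π(θ₀), …, π(θ_k)` are affinely independent
for any `θ₀ < ⋯ < θ_k`; consequently the `-1`-convex hull of any (nonempty) open subset
of the family has full dimension `k` in the simplex. -/
theorem stmt17 (k : ℕ) (π : Fin (k + 1) → ℝ) (hπ : ∀ i, 0 < π i) (hsum : ∑ i, π i = 1)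
    (s : Fin (k + 1) → ℝ) (hs : StrictMono s)
    (pifam : ℝ → Fin (k + 1) → ℝ)
    (hfam : ∀ θ i, pifam θ i
      = π i * Real.exp (s i * θ - Real.log (∑ j, π j * Real.exp (s j * θ)))) :
    (∀ θv : Fin (k + 1) → ℝ, StrictMono θv →
      LinearIndependent ℝ fun j : Fin k => pifam (θv j.succ) - pifam (θv 0)) ∧
    (∀ O : Set ℝ, IsOpen O → O.Nonempty →
      Module.finrank ℝ (vectorSpan ℝ (convexHull ℝ (pifam '' O))) = k) := by
  have hZ : ∀ θ, 0 < ∑ j, π j * Real.exp (s j * θ) := fun θ =>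
    Finset.sum_pos (fun j _ => mul_pos (hπ j) (Real.exp_pos _)) Finset.univ_nonempty
  have hfam' : ∀ θ i, pifam θ i
      = π i * Real.exp (s i * θ) / ∑ j, π j * Real.exp (s j * θ) := by
    intro θ i
    rw [hfam, Real.exp_sub, Real.exp_log (hZ θ), mul_div_assoc]
  have hone : ∀ θ, ∑ i, pifam θ i = 1 := by
    intro θ
    simp only [hfam']
    rw [← Finset.sum_div, div_self (hZ θ).ne']
  have hlin : ∀ θv : Fin (k + 1) → ℝ, StrictMono θv →
      LinearIndependent ℝ fun j : Fin k => pifam (θv j.succ) - pifam (θv 0) := by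
    intro θv hθ
    refine linearIndependent_sub_of_dual (fun j => pifam (θv j)) fun c hc => ?_
    have h0 := expSum_coeff_eq_zero (k + 1) s (fun i => π i * c i) θv hs hθ (by
      intro j
      have h1 := hc j
      simp only [hfam', div_mul_eq_mul_div] at h1
      rw [← Finset.sum_div, div_eq_zero_iff] at h1
      rw [← h1.resolve_right (hZ _).ne']
      exact Finset.sum_congr rfl fun i _ => by ring)
    funext i
    exact (mul_eq_zero.1 (h0 i)).resolve_left (hπ i).ne'
  refine ⟨hlin, fun O hO hne => ?_⟩
  rw [← direction_affineSpan, affineSpan_convexHull, direction_affineSpan]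
  apply le_antisymm
  · let σ : (Fin (k + 1) → ℝ) →ₗ[ℝ] ℝ := ∑ i, LinearMap.proj i
    have hσ : ∀ x, σ x = ∑ i, x i := fun x => by simp [σ]
    have hle : vectorSpan ℝ (pifam '' O) ≤ LinearMap.ker σ := by
      rw [vectorSpan_def, Submodule.span_le]
      rintro _ ⟨_, ⟨a, _, rfl⟩, _, ⟨b, _, rfl⟩, rfl⟩
      simp [hσ, hone]
    have hsurj : Function.Surjective σ := fun y => ⟨Pi.single 0 y, by simp [hσ]⟩
    have hrank := σ.finrank_range_add_finrank_ker
    rw [LinearMap.range_eq_top.2 hsurj, finrank_top, Module.finrank_self,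
      Module.finrank_fin_fun] at hrank
    have := Submodule.finrank_mono hle
    omega
  · obtain ⟨a, ha⟩ := hne
    obtain ⟨ε, hε, hball⟩ := Metric.isOpen_iff.1 hO a ha
    let θv : Fin (k + 1) → ℝ := fun j => a + ε * ((j : ℕ) / ((k : ℝ) + 1))
    have hk : (0 : ℝ) < (k : ℝ) + 1 := by positivity
    have hθ : StrictMono θv := by
      intro i j hij
      have h1 : ((i : ℕ) : ℝ) < ((j : ℕ) : ℝ) := by exact_mod_cast hij
      simp only [θv]
      gcongr
    have hmem : ∀ j, θv j ∈ O := by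
      intro j
      apply hball
      have h1 : ((j : ℕ) : ℝ) < (k : ℝ) + 1 := by exact_mod_cast j.2
      have h2 : ((j : ℕ) : ℝ) / ((k : ℝ) + 1) < 1 := (div_lt_one hk).2 h1
      have h3 : 0 ≤ ((j : ℕ) : ℝ) / ((k : ℝ) + 1) := by positivity
      rw [Metric.mem_ball, Real.dist_eq, show θv j - a = ε * ((j : ℕ) / ((k : ℝ) + 1)) by
        simp [θv], abs_of_nonneg (by positivity)]
      nlinarith
    have hspan := finrank_span_eq_card (hlin θv hθ)
    rw [Fintype.card_fin] at hspan
    refine hspan.symm.le.trans (Submodule.finrank_mono ?_)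
    rw [Submodule.span_le]
    rintro _ ⟨j, rfl⟩
    exact vsub_mem_vectorSpan ℝ (Set.mem_image_of_mem _ (hmem _))
      (Set.mem_image_of_mem _ (hmem _))
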